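/- Let I be a compact interval in ℝ and f : I → I a continuous map. Suppose there is a point of I which is not asymptotically periodic of period 1 or 2, and the set {(x, y) ∈ I × I : liminf_{n→∞} |fⁿ(x) − fⁿ(y)| = 0} is dense in I × I. Then f has periodic points of all even periods and f² is doubly turbulent on I. -/

import Mathlib

open Filter Set Function

/-- `J` is a compact subinterval of `I`. -/
def IsCompactSubinterval (J I : Set ℝ) : Prop :=
  J ⊆ I ∧ ∃ p q : ℝ, p ≤ q ∧ J = Set.Icc p q

/-- `g` is turbulent on the compact interval `J`: there are compact subintervals
`J₀`, `J₁` of `J` with at most one point in common with `g(J₀) ∩ g(J₁) ⊇ J₀ ∪ J₁`. -/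
def TurbulentOn (g : ℝ → ℝ) (J : Set ℝ) : Prop :=
  ∃ J₀ J₁ : Set ℝ, IsCompactSubinterval J₀ J ∧ IsCompactSubinterval J₁ J ∧
    (J₀ ∩ J₁).Subsingleton ∧ J₀ ∪ J₁ ⊆ g '' J₀ ∩ g '' J₁

/-- `g` is doubly turbulent on `I`: it is turbulent on two compact subintervals
of `I` having at most one point in common. -/
def DoublyTurbulentOn (g : ℝ → ℝ) (I : Set ℝ) : Prop :=
  ∃ K L : Set ℝ, IsCompactSubinterval K I ∧ IsCompactSubinterval L I ∧
    (K ∩ L).Subsingleton ∧ TurbulentOn g K ∧ TurbulentOn g L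

/-- `y` is a periodic point of `f` of (least) period `m`. -/
def PeriodicPtOfPeriod (f : ℝ → ℝ) (m : ℕ) (y : ℝ) : Prop :=
  f^[m] y = y ∧ ∀ j : ℕ, 0 < j → j < m → f^[j] y ≠ y

/-- `x` is a chain recurrent point of `f : I → I`. -/
def ChainRecurrentPt (f : ℝ → ℝ) (I : Set ℝ) (x : ℝ) : Prop :=
  x ∈ I ∧ ∀ ε : ℝ, 0 < ε → ∃ n : ℕ, 1 ≤ n ∧ ∃ xs : ℕ → ℝ,
    (∀ i ≤ n, xs i ∈ I) ∧ xs 0 = x ∧ xs n = x ∧ ∀ i < n, |f (xs i) - xs (i + 1)| < ε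

/-- `z` belongs to the ω-limit set of `c` under `f`, i.e. `z` is a limit point of
the sequence `(f^[n] c)`. -/
def OmegaLimitPt (f : ℝ → ℝ) (c z : ℝ) : Prop :=
  ∃ φ : ℕ → ℕ, StrictMono φ ∧ Filter.Tendsto (fun i => f^[φ i] c) Filter.atTop (nhds z)

/-- The sets `K` and `L` lie on opposite sides of the point `z`. -/
def OppositeSides (K L : Set ℝ) (z : ℝ) : Prop :=
  ((∀ x ∈ K, x < z) ∧ (∀ y ∈ L, z < y)) ∨ ((∀ x ∈ K, z < x) ∧ (∀ y ∈ L, y < z))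


/-! ### Basic covering lemmas -/

lemma hull_image {f : ℝ → ℝ} (hf : Continuous f) {p q x y : ℝ} (hx : x ∈ Icc p q)
    (hy : y ∈ Icc p q) : uIcc (f x) (f y) ⊆ f '' Icc p q :=
  (intermediate_value_uIcc hf.continuousOn).trans
    (image_mono (uIcc_subset_Icc hx hy))

lemma cover_Icc {f : ℝ → ℝ} (hf : Continuous f) {p q x y c d : ℝ} (hx : x ∈ Icc p q)
    (hy : y ∈ Icc p q) (hc : f x ≤ c) (hd : d ≤ f y) : Icc c d ⊆ f '' Icc p q := by
  intro w hw
  exact hull_image hf hx hy (by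
    rw [mem_uIcc]; left; exact ⟨hc.trans hw.1, hw.2.trans hd⟩)

lemma subint_aux {f : ℝ → ℝ} (hf : Continuous f) {c d α β : ℝ} (hcd : c ≤ d) (hαβ : α ≤ β)
    (hα : f α = c) (hβ : f β = d) :
    ∃ p q, p ≤ q ∧ α ≤ p ∧ q ≤ β ∧ f '' Icc p q = Icc c d := by
  have hS : IsCompact (Icc α β ∩ f ⁻¹' {c}) :=
    isCompact_Icc.inter_right (isClosed_singleton.preimage hf)
  obtain ⟨p, hp, hpm⟩ := hS.exists_isGreatest ⟨α, ⟨le_rfl, hαβ⟩, hα⟩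
  have hT : IsCompact (Icc p β ∩ f ⁻¹' {d}) :=
    isCompact_Icc.inter_right (isClosed_singleton.preimage hf)
  obtain ⟨q, hq, hqm⟩ := hT.exists_isLeast ⟨β, ⟨hp.1.2, le_rfl⟩, hβ⟩
  have hfp : f p = c := hp.2
  have hfq : f q = d := hq.2
  refine ⟨p, q, hq.1.1, hp.1.1, hq.1.2, ?_⟩
  apply Subset.antisymm
  · rintro _ ⟨x, hx, rfl⟩
    constructor
    · by_contra! h
      have : c ∈ f '' Icc x β := by
        apply cover_Icc hf (x := x) (y := β) (c := c) (d := d) ⟨le_rfl, hx.2.trans hq.1.2⟩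
          ⟨hx.2.trans hq.1.2, le_rfl⟩ h.le hβ.ge ⟨le_rfl, hcd⟩
      obtain ⟨w, hw, hwc⟩ := this
      have h1 : w ≤ p := hpm ⟨⟨hp.1.1.trans (hx.1.trans hw.1), hw.2⟩, hwc⟩
      have h2 : x = p := le_antisymm (hw.1.trans h1) hx.1
      rw [h2] at h; linarith
    · by_contra! h
      have : d ∈ f '' Icc p x := by
        apply cover_Icc hf (x := p) (y := x) (c := c) (d := d) ⟨le_rfl, hx.1⟩
          ⟨hx.1, le_rfl⟩ hfp.le h.le ⟨hcd, le_rfl⟩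
      obtain ⟨w, hw, hwc⟩ := this
      have h1 : q ≤ w := hqm ⟨⟨hw.1, hw.2.trans (hx.2.trans hq.1.2)⟩, hwc⟩
      have h2 : x = q := le_antisymm hx.2 (h1.trans hw.2)
      rw [h2] at h; linarith
  · exact cover_Icc hf ⟨le_rfl, hq.1.1⟩ ⟨hq.1.1, le_rfl⟩ hfp.le hfq.ge

lemma subint {f : ℝ → ℝ} (hf : Continuous f) {c d p q : ℝ} (hcd : c ≤ d)
    (h : Icc c d ⊆ f '' Icc p q) :
    ∃ p' q', p' ≤ q' ∧ Icc p' q' ⊆ Icc p q ∧ f '' Icc p' q' = Icc c d := by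
  obtain ⟨α, hα, hfα⟩ := h ⟨le_rfl, hcd⟩
  obtain ⟨β, hβ, hfβ⟩ := h ⟨hcd, le_rfl⟩
  rcases le_total α β with hab | hab
  · obtain ⟨p', q', h1, h2, h3, h4⟩ := subint_aux hf hcd hab hfα hfβ
    exact ⟨p', q', h1, Icc_subset_Icc (hα.1.trans h2) (h3.trans hβ.2), h4⟩
  · have hf' : Continuous (fun x => f (-x)) := hf.comp continuous_neg
    obtain ⟨p', q', h1, h2, h3, h4⟩ := subint_aux hf' (α := -α) (β := -β) hcd (by linarith)
      (by simpa using hfα) (by simpa using hfβ)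
    refine ⟨-q', -p', by linarith, Icc_subset_Icc (by linarith [hβ.1]) (by linarith [hα.2]), ?_⟩
    rw [← h4]
    have : (fun x => f (-x)) '' Icc p' q' = f '' (Neg.neg '' Icc p' q') := by
      rw [image_image]
    rw [this, image_neg_Icc]

lemma fixed_of_cover {f : ℝ → ℝ} (hf : Continuous f) {c d : ℝ} (hcd : c ≤ d)
    (h : Icc c d ⊆ f '' Icc c d) : ∃ y ∈ Icc c d, f y = y := by
  obtain ⟨α, hα, hfα⟩ := h ⟨le_rfl, hcd⟩
  obtain ⟨β, hβ, hfβ⟩ := h ⟨hcd, le_rfl⟩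
  have hg : Continuous (fun x => f x - x) := hf.sub continuous_id
  obtain ⟨y, hy, hy0⟩ := cover_Icc hg (c := 0) (d := 0) hα hβ (by linarith [hα.1])
    (by linarith [hβ.2]) ⟨le_rfl, le_rfl⟩
  exact ⟨y, hy, by simp only at hy0; linarith⟩

/-- A periodic orbit following the loop `J₀ J₁ J₁ ⋯ J₁`. -/
lemma loop {g : ℝ → ℝ} (hg : Continuous g) {p0 q0 p1 q1 : ℝ} (h0 : p0 ≤ q0)
    (c0 : Icc p0 q0 ∪ Icc p1 q1 ⊆ g '' Icc p0 q0)
    (c1 : Icc p0 q0 ∪ Icc p1 q1 ⊆ g '' Icc p1 q1) (m : ℕ) :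
    ∃ y ∈ Icc p0 q0, g^[m + 1] y = y ∧ ∀ i, 0 < i → i < m + 1 → g^[i] y ∈ Icc p1 q1 := by
  have key : ∀ k : ℕ, ∃ c d, c ≤ d ∧ Icc c d ⊆ Icc p0 q0 ∪ Icc p1 q1 ∧
      g^[k] '' Icc c d = Icc p0 q0 ∧ ∀ w ∈ Icc c d, ∀ i < k, g^[i] w ∈ Icc p1 q1 := by
    intro k
    induction k with
    | zero => exact ⟨p0, q0, h0, subset_union_left, by simp, by simp⟩
    | succ k ih =>
      obtain ⟨c, d, hcd, hsub, him, hit⟩ := ih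
      obtain ⟨c', d', hcd', hsub', him'⟩ := subint hg hcd (hsub.trans c1)
      refine ⟨c', d', hcd', hsub'.trans subset_union_right, ?_, ?_⟩
      · rw [iterate_succ, image_comp, him', him]
      · intro w hw i hi
        cases i with
        | zero => exact hsub' hw
        | succ i =>
          rw [iterate_succ_apply]
          exact hit _ (him' ▸ mem_image_of_mem g hw) i (by omega)
  obtain ⟨c, d, hcd, hsub, him, hit⟩ := key m
  obtain ⟨c', d', hcd', hsub', him'⟩ := subint hg hcd (hsub.trans c0)
  have : g^[m + 1] '' Icc c' d' = Icc p0 q0 := by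
    rw [iterate_succ, image_comp, him', him]
  obtain ⟨y, hy, hfy⟩ := fixed_of_cover (hg.iterate (m + 1)) hcd' (by rw [this]; exact hsub')
  refine ⟨y, hsub' hy, hfy, ?_⟩
  intro i hi0 hi
  cases i with
  | zero => omega
  | succ i =>
    rw [iterate_succ_apply]
    exact hit _ (him' ▸ mem_image_of_mem g hy) i (by omega)

lemma iter_two (f : ℝ → ℝ) (n : ℕ) (y : ℝ) : (fun x => f (f x))^[n] y = f^[2 * n] y := by
  have : (fun x => f (f x)) = f^[2] := rfl
  rw [this, ← iterate_mul]

/-- Points of all even periods from a horseshoe of `f²` lying on one side of `z`. -/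
lemma even_periods {f : ℝ → ℝ} (hf : Continuous f) {z p0 q0 p1 q1 : ℝ} (h0 : p0 ≤ q0)
    (hz : ∀ w ∈ Icc p0 q0, w < z)
    (hfz : ∀ w ∈ Icc p0 q0 ∪ Icc p1 q1, z ≤ f w)
    (c0 : Icc p0 q0 ∪ Icc p1 q1 ⊆ (fun x => f (f x)) '' Icc p0 q0)
    (c1 : Icc p0 q0 ∪ Icc p1 q1 ⊆ (fun x => f (f x)) '' Icc p1 q1)
    (hcom : ∀ w ∈ Icc p0 q0, w ∈ Icc p1 q1 → f (f w) ∉ Icc p1 q1) (m : ℕ) (hm : 1 ≤ m) :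
    ∃ y ∈ Icc p0 q0, PeriodicPtOfPeriod f (2 * m) y := by
  obtain ⟨k, rfl⟩ : ∃ k, m = k + 1 := ⟨m - 1, by omega⟩
  obtain ⟨y, hy, hfix, hit⟩ := loop (hf.comp hf) h0 c0 c1 k
  change (fun x => f (f x))^[k + 1] y = y at hfix
  change ∀ i, 0 < i → i < k + 1 → (fun x => f (f x))^[i] y ∈ Icc p1 q1 at hit
  refine ⟨y, hy, ?_, ?_⟩
  · rw [← iter_two]; exact hfix
  · intro j hj0 hj hfj
    rcases Nat.even_or_odd' j with ⟨i, rfl | rfl⟩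
    · have h1 := hit i (by omega) (by omega)
      rw [iter_two, hfj] at h1
      have h2 := hit 1 (by omega) (by omega)
      exact hcom y hy h1 h2
    · have : z ≤ f (f^[2 * i] y) := by
        apply hfz
        rw [← iter_two]
        rcases Nat.eq_zero_or_pos i with rfl | hi
        · left; exact hy
        · right; exact hit i hi (by omega)
      rw [← iterate_succ_apply' f, hfj] at this
      exact absurd (hz y hy) (not_lt.mpr this)

/-! ### The goal, and configurations which produce it -/

/-- Non-degenerate turbulence, with two adjacent intervals. -/
def Horse (h : ℝ → ℝ) (lo hi : ℝ) : Prop :=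
  ∃ p m q, lo ≤ p ∧ p < m ∧ m < q ∧ q ≤ hi ∧ Icc p q ⊆ h '' Icc p m ∧ Icc p q ⊆ h '' Icc m q

/-- The (strong, non-degenerate) form of the conclusion. -/
def Goal (f : ℝ → ℝ) (a b : ℝ) : Prop :=
  (∀ m : ℕ, 1 ≤ m → ∃ y ∈ Icc a b, PeriodicPtOfPeriod f (2 * m) y) ∧
    ∃ z, Horse (fun x => f (f x)) a z ∧ Horse (fun x => f (f x)) z b

/-- Reflection of a map. -/
def mirr (f : ℝ → ℝ) : ℝ → ℝ := fun x => -f (-x)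

lemma refl_cont {f : ℝ → ℝ} (hf : Continuous f) : Continuous (mirr f) :=
  (hf.comp continuous_neg).neg

lemma refl_iter (f : ℝ → ℝ) (n : ℕ) (x : ℝ) : (mirr f)^[n] x = -(f^[n] (-x)) := by
  induction n generalizing x with
  | zero => simp
  | succ n ih => rw [iterate_succ_apply, ih, iterate_succ_apply]; simp [mirr]

lemma Horse.mirr' {h : ℝ → ℝ} {lo hi : ℝ} (H : Horse (mirr h) lo hi) : Horse h (-hi) (-lo) := by
  obtain ⟨p, m, q, h1, h2, h3, h4, h5, h6⟩ := H
  refine ⟨-q, -m, -p, by linarith, by linarith, by linarith, by linarith, ?_, ?_⟩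
  · intro w hw
    obtain ⟨x, hx, hxw⟩ := h6 (show -w ∈ Icc p q from ⟨by linarith [hw.2], by linarith [hw.1]⟩)
    exact ⟨-x, ⟨by linarith [hx.2], by linarith [hx.1]⟩, by simp only [mirr] at hxw; linarith⟩
  · intro w hw
    obtain ⟨x, hx, hxw⟩ := h5 (show -w ∈ Icc p q from ⟨by linarith [hw.2], by linarith [hw.1]⟩)
    exact ⟨-x, ⟨by linarith [hx.2], by linarith [hx.1]⟩, by simp only [mirr] at hxw; linarith⟩

lemma Goal.mirr' {f : ℝ → ℝ} {a b : ℝ} (H : Goal (mirr f) (-b) (-a)) : Goal f a b := by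
  obtain ⟨h1, z, h2, h3⟩ := H
  have e : (fun x => mirr f (mirr f x)) = mirr (fun x => f (f x)) := by
    funext x; simp [mirr]
  rw [e] at h2 h3
  refine ⟨?_, -z, by simpa using h3.mirr', by simpa using h2.mirr'⟩
  intro m hm
  obtain ⟨y, hy, hp, hn⟩ := h1 m hm
  refine ⟨-y, ⟨by linarith [hy.2], by linarith [hy.1]⟩, ?_, ?_⟩
  · rw [refl_iter] at hp; linarith
  · intro j hj0 hj h
    apply hn j hj0 hj
    rw [refl_iter, h]; simp

def ConfL (f : ℝ → ℝ) : Prop :=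
  ∃ x u z v, x < u ∧ u < z ∧ z < v ∧ f z = z ∧ f x ≤ z ∧ v ≤ f u ∧ f v ≤ x

lemma goal_of_confL {f : ℝ → ℝ} (hf : Continuous f) {a b : ℝ} (hr : ∀ x, f x ∈ Icc a b)
    (H : ConfL f) : Goal f a b := by
  obtain ⟨x, u, z, v, hxu, huz, hzv, hz, hx, hu, hv⟩ := H
  have hax : a ≤ x := (hr v).1.trans hv
  have hvb : v ≤ b := hu.trans (hr u).2
  have k0 : Icc z v ⊆ f '' Icc x u := cover_Icc hf ⟨le_rfl, hxu.le⟩ ⟨hxu.le, le_rfl⟩ hx hu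
  have k1 : Icc z v ⊆ f '' Icc u z := cover_Icc hf ⟨huz.le, le_rfl⟩ ⟨le_rfl, huz.le⟩ hz.le hu
  have kn : Icc x z ⊆ f '' Icc z v := cover_Icc hf ⟨hzv.le, le_rfl⟩ ⟨le_rfl, hzv.le⟩ hv hz.ge
  have img : ∀ s : Set ℝ, (fun x => f (f x)) '' s = f '' (f '' s) := fun s => by
    rw [image_image]
  refine ⟨?_, z, ?_, ?_⟩
  · intro m hm
    obtain ⟨p0, q0, h0, hs0, hi0⟩ := subint hf hzv.le k0
    obtain ⟨p1, q1, h1, hs1, hi1⟩ := subint hf hzv.le k1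
    have hsub : Icc p0 q0 ∪ Icc p1 q1 ⊆ Icc x z := by
      rintro w (hw | hw)
      · exact ⟨(hs0 hw).1, (hs0 hw).2.trans huz.le⟩
      · exact ⟨hxu.le.trans (hs1 hw).1, (hs1 hw).2⟩
    obtain ⟨y, hy, hyp⟩ := even_periods hf (z := z) (p1 := p1) (q1 := q1) h0
      (fun w hw => (hs0 hw).2.trans_lt huz) (by
        rintro w (hw | hw)
        · exact (hi0 ▸ mem_image_of_mem f hw : f w ∈ Icc z v).1
        · exact (hi1 ▸ mem_image_of_mem f hw : f w ∈ Icc z v).1)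
      (by rw [img, hi0]; exact hsub.trans kn) (by rw [img, hi1]; exact hsub.trans kn)
      (by
        intro w hw hw' hg
        have e : w = u := le_antisymm (hs0 hw).2 (hs1 hw').1
        have e2 : f w = v := le_antisymm (hi0 ▸ mem_image_of_mem f hw : f w ∈ Icc z v).2 (e ▸ hu)
        rw [e2] at hg
        linarith [(hs1 hg).1]) m hm
    exact ⟨y, ⟨hax.trans (hs0 hy).1, by linarith [(hs0 hy).2]⟩, hyp⟩
  · refine ⟨x, u, z, hax, hxu, huz, le_rfl, ?_, ?_⟩
    · rw [img]; exact kn.trans (image_mono k0)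
    · rw [img]; exact kn.trans (image_mono k1)
  · obtain ⟨w, hw, hfw⟩ := kn (show u ∈ Icc x z from ⟨hxu.le, huz.le⟩)
    have hzw : z < w := lt_of_le_of_ne hw.1 (by rintro rfl; linarith)
    have hwv : w < v := lt_of_le_of_ne hw.2 (by rintro rfl; linarith)
    refine ⟨z, w, v, le_rfl, hzw, hwv, hvb, ?_, ?_⟩
    · rw [img]
      exact k1.trans (image_mono
        (cover_Icc hf ⟨hzw.le, le_rfl⟩ ⟨le_rfl, hzw.le⟩ hfw.le hz.ge))
    · rw [img]
      exact k0.trans (image_mono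
        (cover_Icc hf ⟨hwv.le, le_rfl⟩ ⟨le_rfl, hwv.le⟩ hv hfw.ge))

/-- Turbulence patterns. -/
def T1 (h : ℝ → ℝ) : Prop :=
  ∃ s r t, s < r ∧ r < t ∧ t ≤ h s ∧ h r ≤ s ∧ t ≤ h t

def T2 (h : ℝ → ℝ) : Prop :=
  ∃ s r t, t < r ∧ r < s ∧ h s ≤ t ∧ s ≤ h r ∧ h t ≤ t

lemma T1_refl {h : ℝ → ℝ} (H : T1 (mirr h)) : T2 h := by
  obtain ⟨s, r, t, h1, h2, h3, h4, h5⟩ := H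
  simp only [mirr] at h3 h4 h5
  exact ⟨-s, -r, -t, by linarith, by linarith, by linarith, by linarith, by linarith⟩

lemma T2_refl {h : ℝ → ℝ} (H : T2 (mirr h)) : T1 h := by
  obtain ⟨s, r, t, h1, h2, h3, h4, h5⟩ := H
  simp only [mirr] at h3 h4 h5
  exact ⟨-s, -r, -t, by linarith, by linarith, by linarith, by linarith, by linarith⟩

lemma refl_refl (f : ℝ → ℝ) : mirr (mirr f) = f := by funext x; simp [mirr]

lemma confL_of_T2 {f : ℝ → ℝ} (hf : Continuous f) (H : T2 f) : ConfL f := by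
  obtain ⟨s, r, t, h1, h2, h3, h4, h5⟩ := H
  obtain ⟨z, hz, hfz⟩ := fixed_of_cover hf (c := r) (d := s) h2.le
    (cover_Icc hf ⟨h2.le, le_rfl⟩ ⟨le_rfl, h2.le⟩ (by linarith) h4)
  have hz1 : r < z := lt_of_le_of_ne hz.1 (by rintro rfl; linarith)
  have hz2 : z < s := lt_of_le_of_ne hz.2 (by rintro rfl; linarith)
  exact ⟨t, r, z, s, h1, hz1, hz2, hfz, by linarith, h4, h3⟩

/-- A folded pattern of `f²` on the left of `z` with `f`-image on the right of `z`. -/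
lemma horse_right {f : ℝ → ℝ} (hf : Continuous f) {z b p m q : ℝ} (hb : ∀ x, f x ≤ b)
    (hpm : p < m) (hmq : m < q) (hP : z ≤ f p) (hM : z ≤ f m) (hQ : z ≤ f q)
    (H : (q ≤ f (f p) ∧ f (f m) ≤ p ∧ q ≤ f (f q)) ∨
      (f (f p) ≤ p ∧ q ≤ f (f m) ∧ f (f q) ≤ p)) :
    Horse (fun x => f (f x)) z b := by
  have img : ∀ s : Set ℝ, (fun x => f (f x)) '' s = f '' (f '' s) := fun s => by
    rw [image_image]
  have i1 : uIcc (f p) (f m) ⊆ f '' Icc p m := hull_image hf ⟨le_rfl, hpm.le⟩ ⟨hpm.le, le_rfl⟩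
  have i2 : uIcc (f m) (f q) ⊆ f '' Icc m q := hull_image hf ⟨le_rfl, hmq.le⟩ ⟨hmq.le, le_rfl⟩
  have i3 : uIcc (f p) (f q) ⊆ f '' Icc p q :=
    hull_image hf ⟨le_rfl, (hpm.trans hmq).le⟩ ⟨(hpm.trans hmq).le, le_rfl⟩
  have nePM : f p ≠ f m := by intro e; rw [e] at H; rcases H with H | H <;> linarith [H.1, H.2.1]
  have neQM : f q ≠ f m := by
    intro e; rw [e] at H; rcases H with H | H <;> linarith [H.2.2, H.2.1]
  -- any interval containing `f m` and one of `f p`, `f q` covers `[p, q]`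
  have cp : ∀ c d, f m ∈ Icc c d → f p ∈ Icc c d → Icc p q ⊆ f '' Icc c d := by
    intro c d h1 h2
    rcases H with H | H
    · exact cover_Icc hf h1 h2 H.2.1 H.1
    · exact cover_Icc hf h2 h1 H.1 H.2.1
  have cq : ∀ c d, f m ∈ Icc c d → f q ∈ Icc c d → Icc p q ⊆ f '' Icc c d := by
    intro c d h1 h2
    rcases H with H | H
    · exact cover_Icc hf h1 h2 H.2.1 H.2.2
    · exact cover_Icc hf h2 h1 H.2.2 H.2.1
  -- the two-fold case
  have fold : ∀ X, (X = f p ∨ X = f q) → uIcc (f m) X ⊆ uIcc (f p) (f m) →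
      uIcc (f m) X ⊆ uIcc (f m) (f q) → X ≠ f m → ∃ c, c ∈ uIcc (f m) X ∧ c ≠ f m ∧ c ≠ X ∧
      (uIcc (f m) X ⊆ f '' (f '' uIcc (f m) c)) ∧ (uIcc (f m) X ⊆ f '' (f '' uIcc c X)) := by
    intro X hX s1 s2 hne
    have hfX : (f (f m) ≤ p ∧ q ≤ f X) ∨ (q ≤ f (f m) ∧ f X ≤ p) := by
      rcases hX with rfl | rfl <;> rcases H with H | H
      · left; exact ⟨H.2.1, H.1⟩
      · right; exact ⟨H.2.1, H.1⟩
      · left; exact ⟨H.2.1, H.2.2⟩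
      · right; exact ⟨H.2.1, H.2.2⟩
    have hc : m ∈ f '' uIcc (f m) X := by
      apply intermediate_value_uIcc hf.continuousOn
      rw [mem_uIcc]
      rcases hfX with h | h
      · left; constructor <;> linarith
      · right; constructor <;> linarith
    obtain ⟨c, hc, hfc⟩ := hc
    refine ⟨c, hc, ?_, ?_, ?_, ?_⟩
    · rintro rfl; rcases hfX with h | h <;> linarith
    · rintro rfl; rcases hfX with h | h <;> linarith
    · rcases hfX with h | h
      · refine s1.trans (i1.trans (image_mono ?_))
        refine Subset.trans ?_ (intermediate_value_uIcc hf.continuousOn)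
        rw [hfc]; intro w hw; rw [mem_uIcc]; left; exact ⟨by linarith [hw.1], hw.2⟩
      · refine s2.trans (i2.trans (image_mono ?_))
        refine Subset.trans ?_ (intermediate_value_uIcc hf.continuousOn)
        rw [hfc]; intro w hw; rw [mem_uIcc]; right; exact ⟨hw.1, by linarith [hw.2]⟩
    · rcases hfX with h | h
      · refine s2.trans (i2.trans (image_mono ?_))
        refine Subset.trans ?_ (intermediate_value_uIcc hf.continuousOn)
        rw [hfc]; intro w hw; rw [mem_uIcc]; left; exact ⟨hw.1, by linarith [hw.2]⟩
      · refine s1.trans (i1.trans (image_mono ?_))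
        refine Subset.trans ?_ (intermediate_value_uIcc hf.continuousOn)
        rw [hfc]; intro w hw; rw [mem_uIcc]; right; exact ⟨by linarith [hw.1], hw.2⟩
  have up : ∀ X, (X = f p ∨ X = f q) → uIcc (f m) X ⊆ uIcc (f p) (f m) →
      uIcc (f m) X ⊆ uIcc (f m) (f q) → X ≠ f m → Horse (fun x => f (f x)) z b := by
    intro X hX s1 s2 hne
    have hXz : z ≤ X := by rcases hX with rfl | rfl <;> assumption
    have hXb : X ≤ b := by rcases hX with rfl | rfl <;> apply hb
    obtain ⟨c, hc, c1, c2, k1, k2⟩ := fold X hX s1 s2 hne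
    rcases lt_or_gt_of_ne hne with hlt | hlt
    · rw [uIcc_of_ge hlt.le] at hc k1 k2
      rw [uIcc_of_ge hc.2] at k1
      rw [uIcc_of_ge hc.1] at k2
      refine ⟨X, c, f m, hXz, lt_of_le_of_ne hc.1 (Ne.symm c2), lt_of_le_of_ne hc.2 c1, hb _,
        ?_, ?_⟩
      · rw [img]; exact k2
      · rw [img]; exact k1
    · rw [uIcc_of_le hlt.le] at hc k1 k2
      rw [uIcc_of_le hc.1] at k1
      rw [uIcc_of_le hc.2] at k2
      refine ⟨f m, c, X, hM, lt_of_le_of_ne hc.1 (Ne.symm c1), lt_of_le_of_ne hc.2 c2, hXb,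
        ?_, ?_⟩
      · rw [img]; exact k1
      · rw [img]; exact k2
  rcases lt_or_gt_of_ne nePM with h1 | h1 <;> rcases lt_or_gt_of_ne neQM with h2 | h2
  · rcases le_total (f p) (f q) with h3 | h3
    · apply up (f q) (Or.inr rfl) _ _ neQM
      · rw [uIcc_of_ge h2.le, uIcc_of_le h1.le]; exact Icc_subset_Icc h3 le_rfl
      · exact subset_rfl
    · apply up (f p) (Or.inl rfl) _ _ nePM
      · rw [uIcc_comm]
      · rw [uIcc_of_ge h2.le, uIcc_of_ge h1.le]; exact Icc_subset_Icc h3 le_rfl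
  · refine ⟨f p, f m, f q, hP, h1, h2, hb _, ?_, ?_⟩
    · rw [img, ← uIcc_of_le (h1.trans h2).le]
      exact i3.trans (image_mono (cp _ _ ⟨h1.le, le_rfl⟩ ⟨le_rfl, h1.le⟩))
    · rw [img, ← uIcc_of_le (h1.trans h2).le]
      exact i3.trans (image_mono (cq _ _ ⟨le_rfl, h2.le⟩ ⟨h2.le, le_rfl⟩))
  · refine ⟨f q, f m, f p, hQ, h2, h1, hb _, ?_, ?_⟩
    · rw [img, ← uIcc_of_ge (h2.trans h1).le]
      exact i3.trans (image_mono (cq _ _ ⟨h2.le, le_rfl⟩ ⟨le_rfl, h2.le⟩))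
    · rw [img, ← uIcc_of_ge (h2.trans h1).le]
      exact i3.trans (image_mono (cp _ _ ⟨le_rfl, h1.le⟩ ⟨h1.le, le_rfl⟩))
  · rcases le_total (f p) (f q) with h3 | h3
    · apply up (f p) (Or.inl rfl) _ _ nePM
      · rw [uIcc_comm]
      · rw [uIcc_of_le h1.le, uIcc_of_le h2.le]; exact Icc_subset_Icc le_rfl h3
    · apply up (f q) (Or.inr rfl) _ _ neQM
      · rw [uIcc_of_le h2.le, uIcc_of_ge h1.le]; exact Icc_subset_Icc le_rfl h3
      · exact subset_rfl

lemma goal_of_T1 {f : ℝ → ℝ} (hf : Continuous f) {a b : ℝ} (hr : ∀ x, f x ∈ Icc a b) {z s r t : ℝ}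
    (hsr : s < r) (hrt : r < t) (htz : t ≤ z) (hfz : ∀ x ∈ Icc s t, z ≤ f x)
    (h1 : t ≤ f (f s)) (h2 : f (f r) ≤ s) (h3 : t ≤ f (f t)) (hzb : z ≤ b) : Goal f a b := by
  have hg : Continuous (fun x => f (f x)) := hf.comp hf
  have has : a ≤ s := (hr _).1.trans h2
  have k0 : Icc s t ⊆ (fun x => f (f x)) '' Icc s r :=
    cover_Icc hg ⟨hsr.le, le_rfl⟩ ⟨le_rfl, hsr.le⟩ h2 h1
  have k1 : Icc s t ⊆ (fun x => f (f x)) '' Icc r t :=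
    cover_Icc hg ⟨le_rfl, hrt.le⟩ ⟨hrt.le, le_rfl⟩ h2 h3
  have hsub : Icc s r ∪ Icc r t ⊆ Icc s t := by rw [Icc_union_Icc_eq_Icc hsr.le hrt.le]
  refine ⟨?_, z, ⟨s, r, t, has, hsr, hrt, htz, k0, k1⟩, ?_⟩
  · intro m hm
    obtain ⟨y, hy, hyp⟩ := even_periods hf (z := z) hsr.le
      (fun w hw => hw.2.trans_lt (hrt.trans_le htz)) (fun w hw => hfz w (hsub hw))
      (hsub.trans k0) (hsub.trans k1)
      (fun w hw hw' hc => by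
        have e : w = r := le_antisymm hw.2 hw'.1
        rw [e] at hc; linarith [hc.1]) m hm
    exact ⟨y, ⟨has.trans hy.1, by linarith [hy.2]⟩, hyp⟩
  · exact horse_right hf (fun x => (hr x).2) hsr hrt (hfz _ ⟨le_rfl, by linarith⟩)
      (hfz _ ⟨hsr.le, hrt.le⟩) (hfz _ ⟨by linarith, le_rfl⟩) (Or.inl ⟨h1, h2, h3⟩)

lemma goal_of_T2 {f : ℝ → ℝ} (hf : Continuous f) {a b : ℝ} (hr : ∀ x, f x ∈ Icc a b) {z s r t : ℝ}
    (htr : t < r) (hrs : r < s) (hsz : s ≤ z) (hfz : ∀ x ∈ Icc t s, z ≤ f x)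
    (h1 : f (f s) ≤ t) (h2 : s ≤ f (f r)) (h3 : f (f t) ≤ t) (hzb : z ≤ b) (hz : f z = z) :
    Goal f a b := by
  have hg : Continuous (fun x => f (f x)) := hf.comp hf
  have hat : a ≤ t := (hr _).1.trans h1
  have hsz' : s < z := lt_of_le_of_ne hsz (by rintro rfl; rw [hz, hz] at h1; linarith)
  have k0 : Icc t s ⊆ (fun x => f (f x)) '' Icc t r :=
    cover_Icc hg ⟨le_rfl, htr.le⟩ ⟨htr.le, le_rfl⟩ h3 h2
  have k1 : Icc t s ⊆ (fun x => f (f x)) '' Icc r s :=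
    cover_Icc hg ⟨hrs.le, le_rfl⟩ ⟨le_rfl, hrs.le⟩ h1 h2
  have hsub : Icc r s ∪ Icc t r ⊆ Icc t s := by
    rw [union_comm, Icc_union_Icc_eq_Icc htr.le hrs.le]
  refine ⟨?_, z, ⟨t, r, s, hat, htr, hrs, hsz, k0, k1⟩, ?_⟩
  · intro m hm
    obtain ⟨y, hy, hyp⟩ := even_periods hf (z := z) hrs.le
      (fun w hw => hw.2.trans_lt hsz') (fun w hw => hfz w (hsub hw))
      (hsub.trans k1) (hsub.trans k0)
      (fun w hw hw' hc => by
        have e : w = r := le_antisymm hw'.2 hw.1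
        rw [e] at hc; linarith [hc.2]) m hm
    exact ⟨y, ⟨by linarith [hy.1], by linarith [hy.2]⟩, hyp⟩
  · exact horse_right hf (fun x => (hr x).2) htr hrs (hfz _ ⟨le_rfl, by linarith⟩)
      (hfz _ ⟨htr.le, hrs.le⟩) (hfz _ ⟨by linarith, le_rfl⟩) (Or.inr ⟨h3, h2, h1⟩)

/-! ### Orbits which do not converge -/

lemma last_in {S : Set ℝ} (hS : IsClosed S) {c d : ℝ} (hc : c ∈ S) (hcd : c ≤ d) :
    ∃ p ∈ S, c ≤ p ∧ p ≤ d ∧ ∀ x, p < x → x ≤ d → x ∉ S := by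
  have hK : IsCompact (S ∩ Icc c d) := isCompact_Icc.inter_left hS
  obtain ⟨p, hp, hp'⟩ := hK.exists_isGreatest ⟨c, hc, le_rfl, hcd⟩
  refine ⟨p, hp.1, hp.2.1, hp.2.2, fun x hx hxd hxS => ?_⟩
  have := hp' ⟨hxS, hp.2.1.trans hx.le, hxd⟩
  linarith

lemma first_in {S : Set ℝ} (hS : IsClosed S) {c d : ℝ} (hd : d ∈ S) (hcd : c ≤ d) :
    ∃ p ∈ S, c ≤ p ∧ p ≤ d ∧ ∀ x, c ≤ x → x < p → x ∉ S := by
  have hK : IsCompact (S ∩ Icc c d) := isCompact_Icc.inter_left hS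
  obtain ⟨p, hp, hp'⟩ := hK.exists_isLeast ⟨d, hd, hcd, le_rfl⟩
  refine ⟨p, hp.1, hp.2.1, hp.2.2, fun x hx hxd hxS => ?_⟩
  have := hp' ⟨hxS, hx, hxd.le.trans hp.2.2⟩
  linarith

lemma max_on {h : ℝ → ℝ} (hh : Continuous h) {c d : ℝ} (hcd : c ≤ d) :
    ∃ u ∈ Icc c d, ∀ x ∈ Icc c d, h x ≤ h u :=
  isCompact_Icc.exists_isMaxOn ⟨c, le_rfl, hcd⟩ hh.continuousOn

lemma min_on {h : ℝ → ℝ} (hh : Continuous h) {c d : ℝ} (hcd : c ≤ d) :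
    ∃ u ∈ Icc c d, ∀ x ∈ Icc c d, h u ≤ h x :=
  isCompact_Icc.exists_isMinOn ⟨c, le_rfl, hcd⟩ hh.continuousOn

lemma ge_ind {P : ℕ → Prop} {n : ℕ} (h0 : P n) (hs : ∀ m, n ≤ m → P m → P (m + 1)) :
    ∀ m, n ≤ m → P m := fun m hm => Nat.le_induction h0 (fun k hk => hs k hk) m hm

def Orb (h : ℝ → ℝ) (y : ℕ → ℝ) : Prop := ∀ n, y (n + 1) = h (y n)

def NonConv (y : ℕ → ℝ) : Prop := ¬∃ l, Tendsto y atTop (nhds l)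

lemma Orb.mirr {h : ℝ → ℝ} {y : ℕ → ℝ} (H : Orb h y) : Orb (mirr h) (fun n => -y n) := by
  intro n; simp [_root_.mirr, H n]

lemma NonConv.neg {y : ℕ → ℝ} (H : NonConv y) : NonConv (fun n => -y n) := by
  rintro ⟨l, hl⟩
  exact H ⟨-l, by simpa using hl.neg⟩

lemma NonConv.tail {y : ℕ → ℝ} (H : NonConv y) (N : ℕ) : NonConv (fun n => y (n + N)) := by
  rintro ⟨l, hl⟩
  exact H ⟨l, (tendsto_add_atTop_iff_nat N).1 hl⟩

lemma T_a {h : ℝ → ℝ} (hh : Continuous h) (hT : ¬T2 h) {y : ℕ → ℝ} (hy : Orb h y) {i j : ℕ}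
    (hij : i < j) (hi : y i < y (i + 1)) (hj : y (j + 1) < y j) : y i ≤ y j := by
  by_contra! hlt
  rw [hy] at hi hj
  obtain ⟨p, hp, h1, h2, h3⟩ := last_in (S := {x | h x ≤ x}) (isClosed_le hh continuous_id)
    (c := y j) (d := y i) hj.le hlt.le
  simp only [mem_ofPred_eq, not_le] at hp h3
  have hpu : p < y i := lt_of_le_of_ne h2 (by rintro rfl; linarith)
  by_cases he : ∃ s, y i ≤ s ∧ h s ≤ p
  · obtain ⟨s1, hs1, hs1'⟩ := he
    obtain ⟨s, hs, k1, -, k3⟩ := first_in (S := {x | h x ≤ p}) (isClosed_le hh continuous_const)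
      (c := y i) (d := s1) hs1' hs1
    simp only [mem_ofPred_eq, not_le] at hs k3
    have hus : y i < s := lt_of_le_of_ne k1 (by rintro rfl; linarith)
    have inv : ∀ m, i ≤ m → p < y m ∧ y m < s := by
      refine ge_ind ?_ ?_
      · exact ⟨hpu, hus⟩
      rintro m - ⟨m1, m2⟩
      rw [hy]
      constructor
      · rcases le_total (y m) (y i) with q | q
        · linarith [h3 _ m1 q]
        · exact k3 _ q m2
      · by_contra! hc
        exact hT ⟨s, y m, p, m1, m2, hs, hc, hp⟩
    linarith [(inv j hij.le).1]
  · push Not at he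
    have inv : ∀ m, i ≤ m → p < y m := by
      refine ge_ind ?_ ?_
      · exact hpu
      intro m _ m1
      rw [hy]
      rcases le_total (y m) (y i) with q | q
      · linarith [h3 _ m1 q]
      · exact he _ q
    linarith [inv j hij.le]

lemma T_b {h : ℝ → ℝ} (hh : Continuous h) (hT : ¬T1 h) {y : ℕ → ℝ} (hy : Orb h y) {i j : ℕ}
    (hij : i < j) (hi : y (i + 1) < y i) (hj : y j < y (j + 1)) : y j ≤ y i := by
  have := T_a (refl_cont hh) (fun H => hT (T2_refl H)) hy.mirr hij (by simpa using hi)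
    (by simpa using hj)
  linarith

/-- The splitting property of an orbit at `z`. -/
def Split (y : ℕ → ℝ) (z : ℝ) : Prop :=
  ∀ n, (y n < z ∧ y n < y (n + 1)) ∨ (z < y n ∧ y (n + 1) < y n)

lemma Split.neg {y : ℕ → ℝ} {z : ℝ} (H : Split y z) : Split (fun n => -y n) (-z) := by
  intro n
  rcases H n with h | h
  · right; constructor <;> linarith
  · left; constructor <;> linarith

lemma nonconv_not_mono {y : ℕ → ℝ} (hn : NonConv y) {A B : ℝ} (hb : ∀ n, y n ∈ Icc A B) (N : ℕ)  :
    ∃ n, N ≤ n ∧ y (n + 1) < y n := by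
  by_contra! H
  apply hn.tail N
  refine ⟨_, tendsto_atTop_ciSup (f := fun n => y (n + N)) (monotone_nat_of_le_succ fun n => ?_) ?_⟩
  · have := H (n + N) (by omega)
    rw [show n + 1 + N = n + N + 1 by ring]; exact this
  · exact ⟨B, by rintro _ ⟨n, rfl⟩; exact (hb _).2⟩

lemma nonconv_not_anti {y : ℕ → ℝ} (hn : NonConv y) {A B : ℝ} (hb : ∀ n, y n ∈ Icc A B) (N : ℕ)  :
    ∃ n, N ≤ n ∧ y n < y (n + 1) := by
  obtain ⟨n, h1, h2⟩ := nonconv_not_mono hn.neg (A := -B) (B := -A)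
    (fun n => ⟨by linarith [(hb n).2], by linarith [(hb n).1]⟩) N
  exact ⟨n, h1, by linarith⟩

lemma L7 {h : ℝ → ℝ} (hh : Continuous h) (hT1 : ¬T1 h) (hT2 : ¬T2 h) {y : ℕ → ℝ} (hy : Orb h y)
    (hn : NonConv y) {A B : ℝ} (hb : ∀ n, y n ∈ Icc A B) : ∃ z, h z = z ∧ Split y z := by
  have hne : ∀ n, h (y n) ≠ y n := by
    intro n e
    apply hn
    refine ⟨y n, tendsto_atTop_of_eventually_const (i₀ := n) ?_⟩
    refine ge_ind ?_ ?_
    · exact rfl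
    intro m _ hm
    rw [hy, hm, e]
  have hne' : ∀ n, y (n + 1) ≠ y n := fun n => by rw [hy]; exact hne n
  have hUD : ∀ i j, y i < y (i + 1) → y (j + 1) < y j → y i ≤ y j := by
    intro i j hi hj
    rcases lt_trichotomy i j with q | q | q
    · exact T_a hh hT2 hy q hi hj
    · rw [q]
    · exact T_b hh hT1 hy q hj hi
  obtain ⟨j0, -, hj0⟩ := nonconv_not_mono hn hb 0
  obtain ⟨i0, -, hi0⟩ := nonconv_not_anti hn hb 0
  set U : Set ℝ := y '' {i | y i < y (i + 1)} with hU
  set D : Set ℝ := y '' {i | y (i + 1) < y i} with hD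
  have Une : U.Nonempty := ⟨_, i0, hi0, rfl⟩
  have Dne : D.Nonempty := ⟨_, j0, hj0, rfl⟩
  have Ub : BddAbove U := ⟨y j0, by rintro _ ⟨i, hi, rfl⟩; exact hUD i j0 hi hj0⟩
  have Db : BddBelow D := ⟨y i0, by rintro _ ⟨j, hj, rfl⟩; exact hUD i0 j hi0 hj⟩
  have hs : sSup U ≤ h (sSup U) := by
    have hc : IsClosed {x | x ≤ h x} := isClosed_le continuous_id hh
    have : U ⊆ {x | x ≤ h x} := by
      rintro _ ⟨i, hi, rfl⟩; simp only [mem_ofPred_eq]; rw [← hy]; exact le_of_lt hi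
    exact closure_minimal this hc (csSup_mem_closure Une Ub)
  have hd : h (sInf D) ≤ sInf D := by
    have hc : IsClosed {x | h x ≤ x} := isClosed_le hh continuous_id
    have : D ⊆ {x | h x ≤ x} := by
      rintro _ ⟨i, hi, rfl⟩; simp only [mem_ofPred_eq]; rw [← hy]; exact le_of_lt hi
    exact closure_minimal this hc (csInf_mem_closure Dne Db)
  have hsd : sSup U ≤ sInf D := csSup_le Une (by
    rintro _ ⟨i, hi, rfl⟩
    exact le_csInf Dne (by rintro _ ⟨j, hj, rfl⟩; exact hUD i j hi hj))
  obtain ⟨z, hz, hfz⟩ : (0:ℝ) ∈ (fun x => h x - x) '' Icc (sSup U) (sInf D) :=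
    intermediate_value_Icc' hsd (hh.sub continuous_id).continuousOn
      ⟨by simpa using hd, by simpa using hs⟩
  have hfz' : h z = z := by simpa [sub_eq_zero] using hfz
  refine ⟨z, hfz', fun n => ?_⟩
  have hnz : y n ≠ z := fun e => hne n (by rw [e, hfz'])
  rcases lt_or_gt_of_ne (hne' n) with q | q
  · right
    refine ⟨lt_of_le_of_ne (hz.2.trans (csInf_le Db ⟨n, q, rfl⟩)) (Ne.symm hnz), q⟩
  · left
    refine ⟨lt_of_le_of_ne ((le_csSup Ub ⟨n, q, rfl⟩).trans hz.1) hnz, q⟩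

lemma R1 {f : ℝ → ℝ} (hf : Continuous f) (hC : ¬ConfL f) {y : ℕ → ℝ} (hy : Orb f y) {z : ℝ}
    (hz : f z = z) (hS : Split y z) {x : ℝ} {n : ℕ} (hx : f x ≤ z) (h1 : x < y n) (h2 : y n < z) :
    ∀ m, n ≤ m → x < y m := by
  obtain ⟨u, hu, hR⟩ := max_on hf (c := x) (d := z) (by linarith)
  have hzR : z ≤ f u := by have := hR z ⟨by linarith, le_rfl⟩; rwa [hz] at this
  have inv : ∀ m, n ≤ m → x < y m ∧ y m ≤ f u := by
    refine ge_ind ?_ ?_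
    · exact ⟨h1, by linarith⟩
    rintro m - ⟨m1, m2⟩
    rcases hS m with q | q
    · refine ⟨by linarith, ?_⟩
      rw [hy]; exact hR _ ⟨m1.le, q.1.le⟩
    · refine ⟨?_, by linarith⟩
      by_contra! hc
      rw [hy] at hc
      refine hC ⟨x, u, z, y m, ?_, ?_, q.1, hz, hx, m2, hc⟩
      · exact lt_of_le_of_ne hu.1 (by rintro rfl; linarith)
      · exact lt_of_le_of_ne hu.2 (by rintro rfl; linarith)
  exact fun m hm => (inv m hm).1

lemma L8a {f : ℝ → ℝ} (hf : Continuous f) (hC : ¬ConfL f) {y : ℕ → ℝ} (hy : Orb f y) {z : ℝ}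
    (hz : f z = z) (hS : Split y z) (hn : NonConv y) {A B : ℝ} (hb : ∀ n, y n ∈ Icc A B) :
    ∃ N, ∀ n, N ≤ n → ¬(y n < z ∧ y (n + 1) < z) := by
  by_contra! H
  have later : ∀ n, y n < z → y (n + 1) < z → ∀ m, n + 1 ≤ m → y n < y m := by
    intro n h1 h2
    refine R1 hf hC hy hz hS (x := y n) (by rw [← hy]; exact h2.le) ?_ h2
    rcases hS n with q | q <;> linarith [q.1, q.2]
  set LL : Set ℝ := y '' {n | y n < z ∧ y (n + 1) < z} with hLL
  have ne : LL.Nonempty := by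
    obtain ⟨n, -, h⟩ := H 0
    exact ⟨_, n, h, rfl⟩
  have bd : BddAbove LL := ⟨z, by rintro _ ⟨n, h, rfl⟩; exact h.1.le⟩
  have hlz : sSup LL ≤ z := csSup_le ne (by rintro _ ⟨n, h, rfl⟩; exact h.1.le)
  have hlf : f (sSup LL) ≤ z := by
    have hc : IsClosed {x | f x ≤ z} := isClosed_le hf continuous_const
    have : LL ⊆ {x | f x ≤ z} := by
      rintro _ ⟨i, hi, rfl⟩; simp only [mem_ofPred_eq]; rw [← hy]; exact hi.2.le
    exact closure_minimal this hc (csSup_mem_closure ne bd)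
  have ev : ∀ c < sSup LL, ∃ N, y N < z ∧ ∀ m, N ≤ m → c < y m := by
    intro c hc
    obtain ⟨_, ⟨n, h, rfl⟩, hn'⟩ := exists_lt_of_lt_csSup ne hc
    exact ⟨n + 1, h.2, fun m hm => hn'.trans (later n h.1 h.2 m hm)⟩
  generalize hl : sSup LL = l at *
  rcases hlz.eq_or_lt with e | hlt
  · -- the limit is `z`
    subst e
    apply hn
    refine ⟨l, ?_⟩
    rw [Metric.tendsto_atTop]
    intro ε hε
    obtain ⟨δ, hδ, hδ'⟩ := Metric.continuousAt_iff.1 (hf.continuousAt (x := l)) ε hε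
    obtain ⟨N, hN, hN'⟩ := ev (l - min δ ε) (by have := lt_min hδ hε; linarith)
    have inv : ∀ m, N ≤ m → y m < l + ε := by
      refine ge_ind ?_ ?_
      · exact (by linarith)
      intro m hm m1
      rcases hS m with q | q
      · have := hδ' (x := y m) (by
          rw [Real.dist_eq, abs_lt]
          constructor <;> linarith [hN' m hm, min_le_left δ ε, q.1])
        rw [Real.dist_eq, abs_lt, hz, ← hy] at this
        linarith [this.2]
      · linarith
    refine ⟨N, fun m hm => ?_⟩
    rw [Real.dist_eq, abs_lt]
    constructor <;> linarith [hN' m hm, inv m hm, min_le_right δ ε]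
  · obtain ⟨u, hu, hR⟩ := max_on hf (c := l) (d := z) hlz
    have hzR : z ≤ f u := by have := hR z ⟨by linarith, le_rfl⟩; rwa [hz] at this
    have hgt : ∀ v ∈ Icc z (f u), l < f v := by
      intro v hv
      rcases hv.1.eq_or_lt with e | hzv
      · rw [← e, hz]; exact hlt
      by_contra! hc
      refine hC ⟨l, u, z, v, ?_, ?_, hzv, hz, hlf, hv.2, hc⟩
      · exact lt_of_le_of_ne hu.1 (by rintro rfl; linarith [hv.2])
      · exact lt_of_le_of_ne hu.2 (by rintro rfl; linarith [hv.2])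
    obtain ⟨η, hη, hη'⟩ := Metric.continuousAt_iff.1 (hf.continuousAt (x := f u)) (f (f u) - l)
      (by linarith [hgt _ ⟨hzR, le_rfl⟩])
    have hgt' : ∀ v, z ≤ v → v < f u + η → l < f v := by
      intro v h1 h2
      rcases le_total v (f u) with q | q
      · exact hgt v ⟨h1, q⟩
      · have := hη' (x := v) (by rw [Real.dist_eq, abs_lt]; constructor <;> linarith)
        rw [Real.dist_eq, abs_lt] at this
        linarith [this.1]
    obtain ⟨ε, hε, hε'⟩ := Metric.continuousAt_iff.1 (hf.continuousAt (x := l)) η hη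
    have hlt' : ∀ v, l - ε < v → v ≤ z → f v < f u + η := by
      intro v h1 h2
      rcases le_total l v with q | q
      · linarith [hR v ⟨q, h2⟩]
      · have := hε' (x := v) (by rw [Real.dist_eq, abs_lt]; constructor <;> linarith)
        rw [Real.dist_eq, abs_lt] at this
        linarith [this.2, hR l ⟨le_rfl, hlz⟩]
    obtain ⟨N, hN, hN'⟩ := ev (l - ε) (by linarith)
    have inv : ∀ m, N ≤ m → y m < f u + η := by
      refine ge_ind ?_ ?_
      · exact (by linarith)
      intro m hm m1
      rcases hS m with q | q
      · rw [hy]; exact hlt' _ (hN' m hm) q.1.le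
      · linarith
    obtain ⟨M, hM, hM'⟩ := nonconv_not_mono hn hb N
    have hMz : z < y M := by
      rcases hS M with q | q
      · linarith
      · exact q.1
    have inv2 : ∀ m, M ≤ m → l < y m := by
      refine ge_ind ?_ ?_
      · exact (by linarith)
      intro m hm m1
      rcases hS m with q | q
      · linarith
      · rw [hy]; exact hgt' _ q.1.le (inv m (hM.trans hm))
    obtain ⟨m, hm, h⟩ := H M
    have : y m ≤ l := hl ▸ le_csSup bd ⟨m, h, rfl⟩
    linarith [inv2 m hm]

lemma L8b {f : ℝ → ℝ} (hf : Continuous f) (hC : ¬ConfL (mirr f)) {y : ℕ → ℝ} (hy : Orb f y) {z : ℝ}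
    (hz : f z = z) (hS : Split y z) (hn : NonConv y) {A B : ℝ} (hb : ∀ n, y n ∈ Icc A B) :
    ∃ N, ∀ n, N ≤ n → ¬(z < y n ∧ z < y (n + 1)) := by
  obtain ⟨N, hN⟩ := L8a (refl_cont hf) hC hy.mirr (z := -z) (by simp [mirr, hz]) hS.neg hn.neg
    (A := -B) (B := -A) (fun n => ⟨by linarith [(hb n).2], by linarith [(hb n).1]⟩)
  exact ⟨N, fun n h1 h2 => hN n h1 ⟨by linarith [h2.1], by linarith [h2.2]⟩⟩

/-! ### The core: an invariant interval -/

lemma R1s {h : ℝ → ℝ} (hh : Continuous h) (hT : ¬T1 h) {y : ℕ → ℝ} (hy : Orb h y) {z : ℝ}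
    (hz : h z = z) (hS : Split y z) {X : ℝ} {n : ℕ} (hX : X ≤ h X) (h1 : z < y n) (h2 : y n < X) :
    ∀ m, n ≤ m → y m < X := by
  obtain ⟨r, hr, hR⟩ := min_on hh (c := z) (d := X) (by linarith)
  have hzR : h r ≤ z := by have := hR z ⟨le_rfl, by linarith⟩; rwa [hz] at this
  have inv : ∀ m, n ≤ m → h r ≤ y m ∧ y m < X := by
    refine ge_ind ?_ ?_
    · exact ⟨by linarith, h2⟩
    rintro m - ⟨m1, m2⟩
    rcases hS m with q | q
    · refine ⟨by linarith, ?_⟩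
      by_contra! hc
      rw [hy] at hc
      refine hT ⟨y m, r, X, by linarith [hr.1], ?_, hc, m1, hX⟩
      exact lt_of_le_of_ne hr.2 (by rintro rfl; linarith)
    · refine ⟨?_, by linarith⟩
      rw [hy]; exact hR _ ⟨q.1.le, m2.le⟩
  exact fun m hm => (inv m hm).2

lemma last_fix {h : ℝ → ℝ} (hh : Continuous h) {c d : ℝ} (hc : c ≤ h c) (hd : h d < d)
    (hcd : c ≤ d) : ∃ p, c ≤ p ∧ p < d ∧ h p = p ∧ ∀ x, p < x → x ≤ d → h x < x := by
  obtain ⟨p, hp, h1, h2, h3⟩ := last_in (S := {x | x ≤ h x}) (isClosed_le continuous_id hh)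
    (c := c) (d := d) hc hcd
  simp only [mem_ofPred_eq, not_le] at hp h3
  refine ⟨p, h1, lt_of_le_of_ne h2 (by rintro rfl; linarith), ?_, h3⟩
  obtain ⟨x, hx, hfx⟩ : (0:ℝ) ∈ (fun x => h x - x) '' Icc p d :=
    intermediate_value_Icc' h2 (hh.sub continuous_id).continuousOn
      ⟨by simpa using hd.le, by simpa using hp⟩
  have hfx' : h x = x := by simpa [sub_eq_zero] using hfx
  rcases hx.1.eq_or_lt with e | e
  · rw [e, hfx']
  · linarith [h3 x e hx.2]

lemma crossings {y : ℕ → ℝ} {z : ℝ} (hS : Split y z) (hn : NonConv y) {A B : ℝ}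
    (hb : ∀ n, y n ∈ Icc A B) (N : ℕ) : ∃ n, N ≤ n ∧ z < y n ∧ y (n + 1) < z := by
  by_contra! H
  obtain ⟨n, h1, h2⟩ := nonconv_not_mono hn hb N
  have inv : ∀ m, n ≤ m → z < y m := by
    refine ge_ind ?_ ?_
    · rcases hS n with q | q
      · linarith
      · exact q.1
    intro m hm m1
    have := H m (h1.trans hm) m1
    rcases hS (m + 1) with q | q
    · linarith
    · exact q.1
  obtain ⟨m, h3, h4⟩ := nonconv_not_anti hn hb n
  rcases hS m with q | q
  · linarith [inv m h3]
  · linarith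

lemma lemS {h : ℝ → ℝ} (hh : Continuous h) (hT : ¬T1 h) {y : ℕ → ℝ} (hy : Orb h y) {z : ℝ}
    (hz : h z = z) (hS : Split y z) (hn : NonConv y) {A B : ℝ} (hb : ∀ n, y n ∈ Icc A B) :
    ∃ z2, z ≤ z2 ∧ h z2 = z2 ∧ (∀ n, z < y n → z2 < y n) ∧
      ∃ n, z < y n ∧ y (n + 1) < z ∧ ∀ x, z2 < x → x ≤ y n → h x < x := by
  choose c hc1 hc2 hc3 using crossings hS hn hb
  obtain ⟨ρ, -, φ, hφ, hlim⟩ := isCompact_Icc.tendsto_subseq (fun k => hb (c k))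
  have near : ∀ ε > 0, ∀ N, ∃ n, N ≤ n ∧ z < y n ∧ y (n + 1) < z ∧ |y n - ρ| < ε := by
    intro ε hε N
    obtain ⟨M, hM⟩ := Metric.tendsto_atTop.1 hlim ε hε
    refine ⟨c (φ (max M N)), ?_, hc2 _, hc3 _, ?_⟩
    · exact (le_max_right M N).trans ((hφ.id_le _).trans (hc1 _))
    · have := hM _ (le_max_left M N)
      rwa [Real.dist_eq] at this
  have hρz : z ≤ ρ := ge_of_tendsto' hlim (fun k => (hc2 _).le)
  have hρ : h ρ ≤ z := by
    have : Tendsto (fun k => h (y (c (φ k)))) atTop (nhds (h ρ)) :=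
      (hh.tendsto ρ).comp hlim
    exact le_of_tendsto' this (fun k => by rw [← hy]; exact (hc3 _).le)
  rcases hρz.eq_or_lt with e | hlt
  · subst e
    by_cases hex : ∃ n, z < y n ∧ y (n + 1) < z ∧ ∀ x, z < x → x ≤ y n → h x < x
    · exact ⟨z, le_rfl, hz, fun n hn => hn, hex⟩
    exfalso
    push Not at hex
    apply hn
    refine ⟨z, ?_⟩
    rw [Metric.tendsto_atTop]
    intro ε hε
    obtain ⟨δ, hδ, hδ'⟩ := Metric.continuousAt_iff.1 (hh.continuousAt (x := z)) ε hε
    obtain ⟨n, -, n1, n2, n3⟩ := near (min δ ε) (lt_min hδ hε) 0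
    rw [abs_lt] at n3
    obtain ⟨X, X1, X2, X3⟩ := hex n n1 n2
    obtain ⟨n', -, p1, p2, p3⟩ := near (X - z) (by linarith) 0
    rw [abs_lt] at p3
    have up := R1s hh hT hy hz hS X3 p1 (by linarith)
    have inv : ∀ m, n' ≤ m → z - ε < y m := by
      refine ge_ind ?_ ?_
      · linarith
      intro m hm m1
      rcases hS m with q | q
      · linarith
      · have := hδ' (x := y m) (by
          rw [Real.dist_eq, abs_lt]
          constructor <;> linarith [up m hm, min_le_left δ ε, q.1])
        rw [Real.dist_eq, abs_lt, hz, ← hy] at this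
        linarith [this.1]
    refine ⟨n', fun m hm => ?_⟩
    rw [Real.dist_eq, abs_lt]
    constructor <;> linarith [inv m hm, up m hm, min_le_right δ ε]
  · obtain ⟨z2, k1, k2, k3, k4⟩ := last_fix hh hz.ge (show h ρ < ρ by linarith) hρz
    refine ⟨z2, k1, k3, ?_, ?_⟩
    · intro n hzn
      by_contra! hle
      have hne : y n ≠ z2 := by
        intro e
        have e2 := hy n
        rw [e, k3] at e2
        rcases hS n with q | q <;> linarith
      have up := R1s hh hT hy hz hS k3.ge hzn (lt_of_le_of_ne hle hne)
      obtain ⟨n', p0, p1, p2, p3⟩ := near (ρ - z2) (by linarith) n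
      rw [abs_lt] at p3
      linarith [up n' p0]
    · have hO : IsOpen {x | h x < x} := isOpen_lt hh continuous_id
      obtain ⟨ε, hε, hε'⟩ := Metric.isOpen_iff.1 hO ρ (show h ρ < ρ by linarith)
      obtain ⟨n, -, n1, n2, n3⟩ := near ε hε 0
      refine ⟨n, n1, n2, fun x hx1 hx2 => ?_⟩
      rw [abs_lt] at n3
      rcases le_total x ρ with q | q
      · exact k4 x hx1 q
      · exact hε' (show x ∈ Metric.ball ρ ε by
          rw [Metric.mem_ball, Real.dist_eq, abs_lt]; constructor <;> linarith)

lemma lemS' {h : ℝ → ℝ} (hh : Continuous h) (hT : ¬T2 h) {y : ℕ → ℝ} (hy : Orb h y) {z : ℝ}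
    (hz : h z = z) (hS : Split y z) (hn : NonConv y) {A B : ℝ} (hb : ∀ n, y n ∈ Icc A B) :
    ∃ z1, z1 ≤ z ∧ h z1 = z1 ∧ (∀ n, y n < z → y n < z1) ∧
      ∃ n, y n < z ∧ z < y (n + 1) ∧ ∀ x, y n ≤ x → x < z1 → x < h x := by
  obtain ⟨z2, h1, h2, h3, n, h4, h5, h6⟩ := lemS (refl_cont hh) (fun H => hT (T1_refl H)) hy.mirr
    (z := -z) (by simp [mirr, hz]) hS.neg hn.neg
    (A := -B) (B := -A) (fun n => ⟨by linarith [(hb n).2], by linarith [(hb n).1]⟩)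
  refine ⟨-z2, by linarith, by simp only [mirr] at h2; linarith, ?_, n, by linarith, by linarith, ?_⟩
  · intro n hn
    have := h3 n (by linarith)
    linarith
  · intro x hx1 hx2
    have := h6 (-x) (by linarith) (by linarith)
    simp only [mirr, neg_neg] at this
    linarith

lemma Ylem {h : ℝ → ℝ} (hh : Continuous h) (hT : ¬T1 h) {k z1 z2 r0 t : ℝ} (hk : k < z1)
    (hz : z1 ≤ z2) (hr0 : z2 < r0) (hrt : r0 < t) (ha : ∀ x, k < x → x < z1 → x < h x)
    (hb : ∀ x, z2 < x → x < t → h x < x) (ht : t ≤ h t) (hr : h r0 ≤ z1)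
    (hd : ∀ x ∈ Icc z1 t, k < h x) :
    ∃ α β, k < α ∧ α < z1 ∧ z2 < β ∧ β < t ∧ MapsTo h (Icc α β) (Icc α β) := by
  obtain ⟨r, hrm, hR⟩ := min_on hh (c := z1) (d := t) (by linarith)
  have hRr : h r ≤ z1 := (hR r0 ⟨by linarith, hrt.le⟩).trans hr
  have hkR : k < h r := hd r hrm
  have hrt' : r < t := lt_of_le_of_ne hrm.2 (by rintro rfl; linarith)
  have cl : ∀ s, h r ≤ s → s ≤ z2 → h s < t := by
    intro s s1 s2
    by_contra! hc
    rcases lt_or_ge s z1 with q | q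
    · exact hT ⟨s, r, t, by linarith [hrm.1], hrt', hc, s1, ht⟩
    · exact hT ⟨s, r0, t, by linarith, hrt, hc, by linarith, ht⟩
  have hO : IsOpen {x | h x < t} := isOpen_lt hh continuous_const
  obtain ⟨ε, hε, hε'⟩ := Metric.isOpen_iff.1 hO (h r) (cl _ le_rfl (by linarith))
  obtain ⟨α, hα1, hα2⟩ := exists_between (max_lt hkR (show h r - ε < h r by linarith))
  have a1 := (le_max_left _ _).trans_lt hα1
  have a2 := (le_max_right _ _).trans_lt hα1
  have cl' : ∀ s, α ≤ s → s ≤ z2 → h s < t := by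
    intro s s1 s2
    rcases le_total (h r) s with q | q
    · exact cl s q s2
    · exact hε' (show s ∈ Metric.ball (h r) ε by
          rw [Metric.mem_ball, Real.dist_eq, abs_lt]; constructor <;> linarith)
  obtain ⟨q, hq, hQ⟩ := max_on hh (c := α) (d := z2) (by linarith)
  have hqt := cl' q hq.1 hq.2
  refine ⟨α, max r0 (h q), a1, by linarith, lt_max_of_lt_left hr0, max_lt hrt hqt, ?_⟩
  intro x hx
  have hxt : x < t := hx.2.trans_lt (max_lt hrt hqt)
  constructor
  · rcases lt_or_ge x z1 with p | p
    · linarith [ha x (by linarith [hx.1]) p, hx.1]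
    · linarith [hR x ⟨p, hxt.le⟩]
  · rcases le_or_gt x z2 with p | p
    · exact (hQ x ⟨hx.1, p⟩).trans (le_max_right _ _)
    · exact (hb x p hxt).le.trans hx.2

lemma Ylem' {h : ℝ → ℝ} (hh : Continuous h) (hT : ¬T2 h) {k z1 z2 s0 t : ℝ} (_hk : z2 < t)
    (hz : z1 ≤ z2) (hs0 : s0 < z1) (hrt : k < s0) (ha : ∀ x, k < x → x < z1 → x < h x)
    (hb : ∀ x, z2 < x → x < t → h x < x) (ht : h k ≤ k) (hr : z2 ≤ h s0)
    (hd : ∀ x ∈ Icc k z2, h x < t) :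
    ∃ α β, k < α ∧ α < z1 ∧ z2 < β ∧ β < t ∧ MapsTo h (Icc α β) (Icc α β) := by
  obtain ⟨α, β, h1, h2, h3, h4, h5⟩ := Ylem (refl_cont hh) (fun H => hT (T1_refl H))
    (k := -t) (z1 := -z2) (z2 := -z1) (r0 := -s0) (t := -k) (by linarith) (by linarith)
    (by linarith) (by linarith)
    (fun x x1 x2 => by have := hb (-x) (by linarith) (by linarith); simp only [mirr]; linarith)
    (fun x x1 x2 => by have := ha (-x) (by linarith) (by linarith); simp only [mirr]; linarith)
    (by simp only [mirr, neg_neg]; linarith) (by simp only [mirr, neg_neg]; linarith)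
    (fun x hx => by
      have := hd (-x) ⟨by linarith [hx.2], by linarith [hx.1]⟩; simp only [mirr]; linarith)
  refine ⟨-β, -α, by linarith, by linarith, by linarith, by linarith, fun x hx => ?_⟩
  have := h5 (show -x ∈ Icc α β from ⟨by linarith [hx.2], by linarith [hx.1]⟩)
  simp only [mirr, neg_neg] at this
  exact ⟨by linarith [this.2], by linarith [this.1]⟩

lemma core {h : ℝ → ℝ} (hh : Continuous h) (hT1 : ¬T1 h) (hT2 : ¬T2 h) {y : ℕ → ℝ} (hy : Orb h y)
    (hn : NonConv y) {A B : ℝ} (hb : ∀ n, y n ∈ Icc A B) {e : ℝ} (he : e ≤ h e)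
    (hye : ∀ n, y n < e) :
    ∃ α ζ β, α < ζ ∧ ζ < β ∧ β < e ∧ h ζ = ζ ∧ MapsTo h (Icc α β) (Icc α β) := by
  obtain ⟨z0, hz0, hS⟩ := L7 hh hT1 hT2 hy hn hb
  obtain ⟨z2, k1, k2, k3, n, k4, k5, k6⟩ := lemS hh hT1 hy hz0 hS hn hb
  obtain ⟨z1, l1, l2, l3, m, l4, l5, l6⟩ := lemS' hh hT2 hy hz0 hS hn hb
  have r1 := k3 n k4
  have r2 := l3 _ k5
  have s1 := l3 m l4
  have s2 := k3 _ l5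
  rw [hy] at r2 s2
  have hye' := hye n
  generalize y n = r0 at *
  generalize y m = s0 at *
  clear hy hn hb hS hye k3 l3
  obtain ⟨t, t1, t2, t3, t4⟩ := first_in (S := {x | x ≤ h x}) (isClosed_le continuous_id hh)
    (c := r0) (d := e) he hye'.le
  simp only [mem_ofPred_eq, not_le] at t1 t4
  have hrt : r0 < t := lt_of_le_of_ne t2 (by rintro rfl; linarith)
  have hb : ∀ x, z2 < x → x < t → h x < x := by
    intro x x1 x2
    rcases le_total x r0 with q | q
    · exact k6 x x1 q
    · exact t4 x q x2
  suffices ∃ α β, α < z1 ∧ z2 < β ∧ β < t ∧ MapsTo h (Icc α β) (Icc α β) by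
    obtain ⟨α, β, q1, q2, q3, q4⟩ := this
    exact ⟨α, z1, β, q1, by linarith, by linarith, l2, q4⟩
  by_cases hex : ∃ x, x < z1 ∧ h x ≤ x
  · obtain ⟨x, x1, x2⟩ := hex
    have hxs : x ≤ s0 := by
      by_contra! hc
      linarith [l6 x hc.le x1]
    obtain ⟨k, p1, p2, p3, p4⟩ := last_in (S := {x | h x ≤ x}) (isClosed_le hh continuous_id)
      (c := x) (d := s0) x2 hxs
    simp only [mem_ofPred_eq, not_le] at p1 p4
    have hks : k < s0 := lt_of_le_of_ne p3 (by rintro rfl; linarith)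
    have ha : ∀ x, k < x → x < z1 → x < h x := by
      intro x x1 x2
      rcases le_total x s0 with q | q
      · exact p4 x x1 q
      · exact l6 x q x2
    by_cases c1 : ∀ x ∈ Icc z1 t, k < h x
    · obtain ⟨α, β, q0, q⟩ := Ylem hh hT1 (by linarith) (l1.trans k1) r1 hrt ha hb t1 r2.le c1
      exact ⟨α, β, q⟩
    by_cases c2 : ∀ x ∈ Icc k z2, h x < t
    · obtain ⟨α, β, q0, q⟩ := Ylem' hh hT2 (by linarith) (l1.trans k1) s1 hks ha hb p1 s2.le c2
      exact ⟨α, β, q⟩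
    exfalso
    push Not at c1 c2
    obtain ⟨r, hr, hr'⟩ := c1
    obtain ⟨s, hs, hs'⟩ := c2
    have hrt' : r < t := lt_of_le_of_ne hr.2 (by rintro rfl; linarith)
    rcases lt_or_ge s r with q | q
    · exact hT1 ⟨s, r, t, q, hrt', hs', by linarith [hs.1], t1⟩
    · exact hT1 ⟨s, r0, t, by linarith [hs.2], hrt, hs', by linarith [hr.1], t1⟩
  · push Not at hex
    obtain ⟨r, hr, hR⟩ := min_on hh (c := z1) (d := t) (by linarith)
    have hR1 := hR z1 ⟨le_rfl, by linarith⟩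
    obtain ⟨α, β, q0, q⟩ := Ylem hh hT1 (k := h r - 1) (by linarith) (l1.trans k1) r1 hrt
      (fun x _ hx => hex x hx) hb t1 r2.le (fun x hx => by linarith [hR x hx])
    exact ⟨α, β, q⟩

/-! ### Reduction to the core -/

lemma nonconv_shift {F : ℝ → ℝ} (hF : Continuous F) {y : ℕ → ℝ} (hy : Orb F y)
    (hn : NonConv (fun n => y (2 * n))) (N : ℕ) : NonConv (fun n => y (N + 2 * n)) := by
  rintro ⟨l, hl⟩
  rcases Nat.even_or_odd' N with ⟨k, rfl | rfl⟩
  · apply hn.tail k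
    refine ⟨l, hl.congr fun n => ?_⟩
    congr 1; ring
  · apply hn.tail (k + 1)
    refine ⟨F l, ((hF.tendsto l).comp hl).congr fun n => ?_⟩
    simp only [comp_apply]
    rw [← hy]
    congr 1; ring

lemma main_dichotomy {F : ℝ → ℝ} (hF : Continuous F) {a b : ℝ} (hr : ∀ x, F x ∈ Icc a b)
    {y : ℕ → ℝ} (hy : Orb F y) (hyb : ∀ n, y n ∈ Icc a b)
    (hn2 : NonConv (fun n => y (2 * n))) :
    Goal F a b ∨ ∃ α ζ β z, α < ζ ∧ ζ < β ∧ β < z ∧ F (F ζ) = ζ ∧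
      MapsTo (fun x => F (F x)) (Icc α β) (Icc α β) ∧ ∀ x ∈ Icc α β, z < F x := by
  rw [or_iff_not_imp_left]
  intro hG
  have hCL : ¬ConfL F := fun H => hG (goal_of_confL hF hr H)
  have hCR : ¬ConfL (mirr F) := fun H => hG (Goal.mirr' (goal_of_confL (refl_cont hF)
    (fun x => ⟨by simp only [mirr]; linarith [(hr (-x)).2],
      by simp only [mirr]; linarith [(hr (-x)).1]⟩) H))
  have hT2 : ¬T2 F := fun H => hCL (confL_of_T2 hF H)
  have hT1 : ¬T1 F := fun H => hCR (confL_of_T2 (refl_cont hF) (T1_refl (by rwa [refl_refl])))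
  have hn : NonConv y := by
    rintro ⟨l, hl⟩
    exact hn2 ⟨l, hl.comp (tendsto_id.const_mul_atTop' (by norm_num : 0 < 2))⟩
  obtain ⟨z, hz, hS⟩ := L7 hF hT1 hT2 hy hn hyb
  obtain ⟨N1, hN1⟩ := L8a hF hCL hy hz hS hn hyb
  obtain ⟨N2, hN2⟩ := L8b hF hCR hy hz hS hn hyb
  obtain ⟨N, hN, hNu⟩ := nonconv_not_anti hn hyb (max N1 N2)
  have hNz : y N < z := by
    rcases hS N with q | q
    · exact q.1
    · linarith
  have alt1 : ∀ n, N ≤ n → y n < z → z < y (n + 1) := by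
    intro n h1 h2
    have := hN1 n (by omega)
    rcases hS (n + 1) with q | q
    · exact absurd ⟨h2, q.1⟩ this
    · exact q.1
  have alt2 : ∀ n, N ≤ n → z < y n → y (n + 1) < z := by
    intro n h1 h2
    have := hN2 n (by omega)
    rcases hS (n + 1) with q | q
    · exact q.1
    · exact absurd ⟨h2, q.1⟩ this
  have left : ∀ n, y (N + 2 * n) < z := by
    intro n
    induction n with
    | zero => exact hNz
    | succ n ih =>
      have h1 := alt2 (N + 2 * n + 1) (by omega) (alt1 (N + 2 * n) (by omega) ih)
      rwa [show N + 2 * (n + 1) = N + 2 * n + 1 + 1 by ring]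
  have right : ∀ n, z < F (y (N + 2 * n)) := by
    intro n; rw [← hy]; exact alt1 _ (by omega) (left n)
  have step : ∀ n, y (n + 2) = F (F (y n)) := by intro n; rw [hy, hy]
  have hnl := nonconv_shift hF hy hn2 N
  -- oscillation
  obtain ⟨lam, mu, hlm, flam, fmu⟩ : ∃ lam mu : ℝ, lam < mu ∧
      (∃ᶠ n in atTop, y (N + 2 * n) < lam) ∧ ∃ᶠ n in atTop, mu < y (N + 2 * n) := by
    by_contra! H
    apply hnl
    refine tendsto_of_no_upcrossings dense_univ ?_ ?_ ?_
    · rintro c - d - hcd ⟨h1, h2⟩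
      exact h2 ((H c d hcd h1).mono fun n hn => not_lt.2 hn)
    · exact isBoundedUnder_of ⟨b, fun n => (hyb _).2⟩
    · exact isBoundedUnder_of ⟨a, fun n => (hyb _).1⟩
  obtain ⟨nm, hnm⟩ := fmu.exists
  have hmz : mu < z := hnm.trans (left nm)
  have key : ∀ w n, F w ≤ z → w < y (N + 2 * n) → w < lam := by
    intro w n h1 h2
    by_contra! hc
    have := R1 hF hCL hy hz hS h1 h2 (left n)
    obtain ⟨k, hk, hk'⟩ := (frequently_atTop.1 flam) n
    have := this (N + 2 * k) (by omega)
    linarith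
  -- the right end
  obtain ⟨wr, r1, r2, r3, r4⟩ := first_in (S := {x | F x ≤ z}) (isClosed_le hF continuous_const)
    (c := lam) (d := z) (show F z ≤ z by rw [hz]) (by linarith)
  simp only [mem_ofPred_eq, not_le] at r1 r4
  have hFlam : z < F lam := by
    by_contra! hc
    exact lt_irrefl _ (key lam nm hc (by linarith))
  have hlwr : lam < wr := lt_of_le_of_ne r2 (by rintro rfl; linarith)
  have hFwr : F wr = z := by
    obtain ⟨c, hc, hFc⟩ := intermediate_value_Icc' r2 hF.continuousOn ⟨r1, hFlam.le⟩
    rcases hc.2.eq_or_lt with e | e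
    · rw [← e, hFc]
    · linarith [r4 c hc.1 e]
  have hylr : ∀ n, y (N + 2 * n) < wr := by
    intro n
    by_contra! hc
    have hne : wr ≠ y (N + 2 * n) := by
      intro e
      have := right n
      rw [← e, hFwr] at this
      exact lt_irrefl _ this
    linarith [key wr n r1 (lt_of_le_of_ne hc hne)]
  -- the left end
  obtain ⟨wl, l1, l2, l3, M, l4⟩ : ∃ wl, wl < lam ∧ (∀ x, wl < x → x ≤ lam → z < F x) ∧
      (∀ x ∈ Icc wl wr, wl < F (F x)) ∧ ∃ M, ∀ n, M ≤ n → wl < y (N + 2 * n) := by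
    by_cases hex : ∃ w, w ≤ lam ∧ F w ≤ z
    · obtain ⟨w, w1, w2⟩ := hex
      obtain ⟨wl, q1, q2, q3, q4⟩ := last_in (S := {x | F x ≤ z})
        (isClosed_le hF continuous_const) (c := w) (d := lam) w2 w1
      simp only [mem_ofPred_eq, not_le] at q1 q4
      have hlt : wl < lam := lt_of_le_of_ne q3 (by rintro rfl; linarith)
      have hFwl : F wl = z := by
        obtain ⟨c, hc, hFc⟩ := intermediate_value_Icc q3 hF.continuousOn ⟨q1, hFlam.le⟩
        rcases hc.1.eq_or_lt with e | e
        · rw [e, hFc]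
        · linarith [q4 c e hc.2]
      refine ⟨wl, hlt, q4, ?_, nm, ?_⟩
      · intro x hx
        rcases hx.1.eq_or_lt with e | e
        · rw [← e, hFwl, hz]; linarith
        rcases hx.2.eq_or_lt with e' | e'
        · rw [e', hFwr, hz]; linarith
        have hFx : z < F x := by
          rcases le_total x lam with q | q
          · exact q4 x e q
          · exact r4 x q e'
        by_contra! hc
        exact hCL ⟨wl, x, z, F x, e, by linarith, hFx, hz, q1, le_rfl, hc⟩
      · intro n hn
        exact R1 hF hCL hy hz hS q1 (show wl < y (N + 2 * nm) by linarith) (left nm) _ (by omega)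
    · push Not at hex
      refine ⟨min (a - 1) (lam - 1), by linarith [min_le_right (a - 1) (lam - 1)],
        fun x _ hx => hex x hx, fun x _ => ?_, 0, fun n _ => ?_⟩
      · linarith [min_le_left (a - 1) (lam - 1), (hr (F x)).1]
      · linarith [min_le_left (a - 1) (lam - 1), (hyb (N + 2 * n)).1]
  have hpos : ∀ x, wl < x → x < wr → z < F x := by
    intro x h1 h2
    rcases le_total x lam with q | q
    · exact l2 x h1 q
    · exact r4 x q h2
  have hpos' : ∀ x, wl < x → x ≤ wr → z ≤ F x := by
    intro x h1 h2
    rcases h2.eq_or_lt with e | e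
    · rw [e, hFwr]
    · exact (hpos x h1 e).le
  have hzb : z ≤ b := by rw [← hz]; exact (hr z).2
  have hwlr : wl < wr := l1.trans hlwr
  -- the truncated map
  set h : ℝ → ℝ := fun x => min (F (F (max wl (min wr x)))) wr with hdef
  have hh : Continuous h := by
    have : Continuous (fun x : ℝ => max wl (min wr x)) := by fun_prop
    exact (hF.comp (hF.comp this)).min continuous_const
  have clamp : ∀ x, wl ≤ x → x ≤ wr → h x = min (F (F x)) wr := by
    intro x h1 h2
    simp only [hdef]
    rw [min_eq_right h2, max_eq_right h1]
  obtain ⟨q, hq, hQ⟩ := min_on (hF.comp hF) hwlr.le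
  have hlow : ∀ x, min (F (F q)) wr ≤ h x := by
    intro x
    refine min_le_min ?_ le_rfl
    exact hQ _ ⟨le_max_left _ _, max_le hwlr.le (min_le_left _ _)⟩
  have hmin : wl < min (F (F q)) wr := lt_min (l3 q hq) hwlr
  have hlow' : ∀ x, wl < h x := fun x => hmin.trans_le (hlow x)
  have hup : ∀ x, h x ≤ wr := fun x => min_le_right _ _
  have hg1 : ∀ x, wl ≤ x → x ≤ wr → h x < wr → F (F x) = h x := by
    intro x h1 h2 h3
    rw [clamp x h1 h2] at h3 ⊢
    rcases min_lt_iff.1 h3 with q | q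
    · rw [min_eq_left q.le]
    · exact absurd q (lt_irrefl _)
  have hg2 : ∀ x, wl ≤ x → x ≤ wr → h x ≤ F (F x) := by
    intro x h1 h2
    rw [clamp x h1 h2]; exact min_le_left _ _
  have hT1h : ¬T1 h := by
    rintro ⟨s, r, t, p1, p2, p3, p4, p5⟩
    have s1 := (hlow' r).trans_le p4
    have t1 := p3.trans (hup s)
    have e := hg1 r (by linarith) (by linarith) (by linarith)
    apply hG
    refine goal_of_T1 hF hr p1 p2 (t1.trans r3) (fun x hx => hpos' x (by linarith [hx.1])
      (by linarith [hx.2])) (p3.trans (hg2 _ (by linarith) (by linarith))) (by rw [e]; exact p4)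
      (p5.trans (hg2 _ (by linarith) (by linarith))) hzb
  have hT2h : ¬T2 h := by
    rintro ⟨s, r, t, p1, p2, p3, p4, p5⟩
    have t1 := (hlow' s).trans_le p3
    have s1 := p4.trans (hup r)
    have e := hg1 s (by linarith) (by linarith) (by linarith)
    have e' := hg1 t (by linarith) (by linarith) (by linarith)
    apply hG
    refine goal_of_T2 hF hr p1 p2 (s1.trans r3) (fun x hx => hpos' x (by linarith [hx.1])
      (by linarith [hx.2])) (by rw [e]; exact p3) (p4.trans (hg2 _ (by linarith) (by linarith)))
      (by rw [e']; exact p5) hzb hz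
  have hyl : ∀ n, wl < y (N + 2 * M + 2 * n) := by
    intro n
    have := l4 (M + n) (by omega)
    rwa [show N + 2 * (M + n) = N + 2 * M + 2 * n by ring] at this
  have hyr : ∀ n, y (N + 2 * M + 2 * n) < wr := by
    intro n
    have := hylr (M + n)
    rwa [show N + 2 * (M + n) = N + 2 * M + 2 * n by ring] at this
  have horb : Orb h (fun n => y (N + 2 * M + 2 * n)) := by
    intro n
    have e : y (N + 2 * M + 2 * (n + 1)) = F (F (y (N + 2 * M + 2 * n))) := step _
    simp only
    rw [clamp _ (hyl n).le (hyr n).le, ← e, min_eq_left (hyr _).le]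
  obtain ⟨α, ζ, β, c1, c2, c3, c4, c5⟩ := core hh hT1h hT2h horb
    (nonconv_shift hF hy hn2 _) (fun n => hyb _) (e := wr) (by
      rw [clamp wr hwlr.le le_rfl, hFwr, hz]; exact le_min r3 le_rfl) hyr
  obtain ⟨w, hw1, hw2⟩ := exists_between hmin
  have hζw : w < ζ := by have := hlow ζ; rw [c4] at this; linarith
  have hin : ∀ x ∈ Icc (max α w) β, F (F x) = h x ∧ z < F x ∧ h x ∈ Icc (max α w) β := by
    intro x hx
    have x1 : wl < x := by linarith [le_max_right α w, hx.1]
    have x2 : x < wr := by linarith [hx.2]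
    have hm := c5 (show x ∈ Icc α β from ⟨(le_max_left _ _).trans hx.1, hx.2⟩)
    refine ⟨hg1 x x1.le x2.le (by linarith [hm.2]), hpos x x1 x2, max_le hm.1 ?_, hm.2⟩
    linarith [hlow x]
  refine ⟨max α w, ζ, β, z, max_lt c1 hζw, c2, by linarith, ?_, ?_, fun x hx => (hin x hx).2.1⟩
  · rw [(hin ζ ⟨(max_lt c1 hζw).le, c2.le⟩).1, c4]
  · intro x hx
    simp only
    rw [(hin x hx).1]; exact (hin x hx).2.2

lemma separated {F : ℝ → ℝ} {α β z : ℝ}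
    (hm : MapsTo (fun x => F (F x)) (Icc α β) (Icc α β)) (hF : ∀ x ∈ Icc α β, z < F x)
    {p q : ℝ} (hp : p ∈ Icc α β) (hq : F q ∈ Icc α β) (n : ℕ) (hn : 1 ≤ n) :
    z - β ≤ |F^[n] p - F^[n] q| := by
  have ev : ∀ x ∈ Icc α β, ∀ k, F^[2 * k] x ∈ Icc α β := by
    intro x hx k
    induction k with
    | zero => exact hx
    | succ k ih =>
      have e : F^[2 * (k + 1)] x = F (F (F^[2 * k] x)) := by
        rw [show 2 * (k + 1) = 2 * k + 1 + 1 by ring, iterate_succ_apply', iterate_succ_apply']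
      rw [e]; exact hm ih
  have od : ∀ x ∈ Icc α β, ∀ k, z < F^[2 * k + 1] x := by
    intro x hx k
    rw [iterate_succ_apply']; exact hF _ (ev x hx k)
  obtain ⟨m, rfl⟩ : ∃ m, n = m + 1 := ⟨n - 1, by omega⟩
  rw [iterate_succ_apply F m q]
  rcases Nat.even_or_odd' m with ⟨k, rfl | rfl⟩
  · have h1 := od p hp k
    have h2 := (ev _ hq k).2
    exact le_trans (by linarith) (le_abs_self _)
  · have h1 := od _ hq k
    have h2 := (ev p hp (k + 1)).2
    rw [show 2 * (k + 1) = 2 * k + 1 + 1 by ring] at h2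
    rw [abs_sub_comm]
    exact le_trans (by linarith) (le_abs_self _)

lemma turb_of_horse {g : ℝ → ℝ} {lo hi : ℝ} (H : Horse g lo hi) :
    ∃ p q, lo ≤ p ∧ p ≤ q ∧ q ≤ hi ∧ TurbulentOn g (Icc p q) := by
  obtain ⟨p, m, q, h1, h2, h3, h4, h5, h6⟩ := H
  refine ⟨p, q, h1, (h2.trans h3).le, h4, Icc p m, Icc m q,
    ⟨Icc_subset_Icc le_rfl h3.le, p, m, h2.le, rfl⟩,
    ⟨Icc_subset_Icc h2.le le_rfl, m, q, h3.le, rfl⟩, ?_, ?_⟩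
  · rintro x ⟨hx, hx'⟩ w ⟨hw, hw'⟩
    linarith [hx.2, hx'.1, hw.2, hw'.1]
  · rw [Icc_union_Icc_eq_Icc h2.le h3.le]
    exact subset_inter h5 h6

lemma TurbulentOn.congr {g g' : ℝ → ℝ} {J : Set ℝ} (H : TurbulentOn g J) (e : EqOn g g' J) :
    TurbulentOn g' J := by
  obtain ⟨J0, J1, h1, h2, h3, h4⟩ := H
  refine ⟨J0, J1, h1, h2, h3, ?_⟩
  rwa [← (e.mono h1.1).image_eq, ← (e.mono h2.1).image_eq]

theorem stmt_8 (a b : ℝ) (hab : a ≤ b) (f : ℝ → ℝ)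
    (hf : ContinuousOn f (Set.Icc a b)) (hmaps : Set.MapsTo f (Set.Icc a b) (Set.Icc a b))
    (hnotap : ∃ x ∈ Set.Icc a b, ¬∃ y ∈ Set.Icc a b, f^[2] y = y ∧
      Filter.Tendsto (fun n => |f^[n] x - f^[n] y|) Filter.atTop (nhds 0))
    (hdense : Set.Icc a b ×ˢ Set.Icc a b ⊆ closure {p : ℝ × ℝ |
      p.1 ∈ Set.Icc a b ∧ p.2 ∈ Set.Icc a b ∧
      Filter.liminf (fun n => |f^[n] p.1 - f^[n] p.2|) Filter.atTop = 0}) :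
    (∀ m : ℕ, 1 ≤ m → ∃ y ∈ Set.Icc a b, PeriodicPtOfPeriod f (2 * m) y) ∧
      DoublyTurbulentOn (f^[2]) (Set.Icc a b) := by
  set F : ℝ → ℝ := fun x => f (max a (min b x)) with hFdef
  have hcl : ∀ x, max a (min b x) ∈ Icc a b := fun x =>
    ⟨le_max_left _ _, max_le hab (min_le_left _ _)⟩
  have hF : Continuous F := hf.comp_continuous (by fun_prop) hcl
  have hr : ∀ x, F x ∈ Icc a b := fun x => hmaps (hcl x)
  have hFf : ∀ x ∈ Icc a b, F x = f x := by
    intro x hx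
    simp only [hFdef]
    rw [min_eq_right hx.2, max_eq_right hx.1]
  have hit : ∀ n, ∀ x ∈ Icc a b, F^[n] x = f^[n] x ∧ f^[n] x ∈ Icc a b := by
    intro n x hx
    induction n with
    | zero => exact ⟨rfl, hx⟩
    | succ n ih =>
      rw [iterate_succ_apply', iterate_succ_apply', ih.1]
      exact ⟨hFf _ ih.2, hmaps ih.2⟩
  have hgoal : Goal F a b := by
    obtain ⟨x, hx, hnot⟩ := hnotap
    have horb : Orb F (fun n => F^[n] x) := fun n => iterate_succ_apply' F n x
    have hb : ∀ n, F^[n] x ∈ Icc a b := fun n => by rw [(hit n x hx).1]; exact (hit n x hx).2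
    rcases main_dichotomy hF hr horb hb (by
      rintro ⟨l, hl⟩
      have hl' : Tendsto (fun n => F^[2 * n] x) atTop (nhds l) := hl
      have hlI : l ∈ Icc a b := isClosed_Icc.mem_of_tendsto hl' (Eventually.of_forall fun n => hb _)
      have hstep : ∀ n, F^[2 * (n + 1)] x = F (F (F^[2 * n] x)) := by
        intro n
        rw [show 2 * (n + 1) = 2 * n + 1 + 1 by ring, iterate_succ_apply', iterate_succ_apply']
      have hl1 : Tendsto (fun n => F (F^[2 * n] x)) atTop (nhds (F l)) :=
        (hF.tendsto l).comp hl'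
      have hl2 : Tendsto (fun n => F (F (F^[2 * n] x))) atTop (nhds (F (F l))) :=
        (hF.tendsto (F l)).comp hl1
      have hfix : F (F l) = l := by
        refine tendsto_nhds_unique hl2 ?_
        have := (tendsto_add_atTop_iff_nat 1).2 hl'
        exact this.congr hstep
      have hfixn : ∀ n, F^[2 * n] l = l := by
        intro n
        induction n with
        | zero => rfl
        | succ n ih =>
          rw [show 2 * (n + 1) = 2 * n + 1 + 1 by ring, iterate_succ_apply', iterate_succ_apply',
            ih, hfix]
      refine hnot ⟨l, hlI, ?_, ?_⟩
      · rw [← (hit 2 l hlI).1]; exact hfix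
      · rw [Metric.tendsto_atTop]
        intro ε hε
        obtain ⟨N1, hN1⟩ := Metric.tendsto_atTop.1 hl' ε hε
        obtain ⟨N2, hN2⟩ := Metric.tendsto_atTop.1 hl1 ε hε
        refine ⟨2 * max N1 N2, fun n hn => ?_⟩
        rw [← (hit n x hx).1, ← (hit n l hlI).1, Real.dist_eq, sub_zero, abs_abs]
        rcases Nat.even_or_odd' n with ⟨k, rfl | rfl⟩
        · have := hN1 k (by have := le_max_left N1 N2; omega)
          rw [hfixn]; rwa [Real.dist_eq] at this
        · have := hN2 k (by have := le_max_right N1 N2; omega)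
          rw [iterate_succ_apply', iterate_succ_apply', hfixn]; rwa [Real.dist_eq] at this) with
      H | ⟨α, ζ, β, z, h1, h2, h3, h4, h5, h6⟩
    · exact H
    exfalso
    have hζ : ζ ∈ Icc a b := h4 ▸ hr _
    have hmem := hdense (show (ζ, F ζ) ∈ Icc a b ×ˢ Icc a b from ⟨hζ, hr _⟩)
    have hO : IsOpen {p : ℝ × ℝ | p.1 ∈ Ioo α β ∧ F p.2 ∈ Ioo α β} :=
      (isOpen_Ioo.preimage continuous_fst).inter
        (isOpen_Ioo.preimage (hF.comp continuous_snd))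
    obtain ⟨p, ⟨hp1, hp2⟩, hpa, hpb, hlim⟩ := mem_closure_iff.1 hmem _ hO
      (show ζ ∈ Ioo α β ∧ F (F ζ) ∈ Ioo α β by rw [h4]; exact ⟨⟨h1, h2⟩, ⟨h1, h2⟩⟩)
    have hsep : ∀ᶠ n in atTop, z - β ≤ |f^[n] p.1 - f^[n] p.2| := by
      filter_upwards [eventually_ge_atTop 1] with n hn
      rw [← (hit n _ hpa).1, ← (hit n _ hpb).1]
      exact separated h5 h6 (Ioo_subset_Icc_self hp1) (Ioo_subset_Icc_self hp2) n hn
    have hcob : IsCoboundedUnder (· ≥ ·) atTop (fun n => |f^[n] p.1 - f^[n] p.2|) := by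
      refine IsBoundedUnder.isCoboundedUnder_ge (isBoundedUnder_of ⟨b - a, fun n => ?_⟩)
      have q1 := (hit n _ hpa).2
      have q2 := (hit n _ hpb).2
      rw [abs_le]
      constructor <;> linarith [q1.1, q1.2, q2.1, q2.2]
    have := le_liminf_of_le hcob hsep
    rw [hlim] at this
    linarith
  obtain ⟨hper, z, hz1, hz2⟩ := hgoal
  refine ⟨?_, ?_⟩
  · intro m hm
    obtain ⟨y, hy, k1, k2⟩ := hper m hm
    refine ⟨y, hy, ?_, fun j hj0 hj => ?_⟩
    · rw [← (hit _ y hy).1]; exact k1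
    · rw [← (hit _ y hy).1]; exact k2 j hj0 hj
  · obtain ⟨p, q, a1, a2, a3, a4⟩ := turb_of_horse hz1
    obtain ⟨p', q', b1, b2, b3, b4⟩ := turb_of_horse hz2
    have e : EqOn (fun x => F (F x)) (f^[2]) (Icc a b) := fun x hx => (hit 2 x hx).1
    have s1 : Icc p q ⊆ Icc a b := Icc_subset_Icc a1 (by linarith)
    have s2 : Icc p' q' ⊆ Icc a b := Icc_subset_Icc (by linarith) b3
    refine ⟨Icc p q, Icc p' q', ⟨s1, p, q, a2, rfl⟩, ⟨s2, p', q', b2, rfl⟩, ?_,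
      a4.congr (e.mono s1), b4.congr (e.mono s2)⟩
    rintro x ⟨hx, hx'⟩ w ⟨hw, hw'⟩
    linarith [hx.2, hx'.1, hw.2, hw'.1]
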